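/- Let μ and ν be Borel probability measures on ℝ^d and let k : ℝ^d × ℝ^d → (0,∞) be Borel measurable with ∫_{ℝ^d} k(x,y) dy = 1 for every x ∈ ℝ^d; for bounded Borel g : ℝ^d → ℝ define (Tg)(x) := ∫_{ℝ^d} k(x,y) g(y) dy. Assume: (invariance) ∫_{ℝ^d} Tg dν = ∫_{ℝ^d} g dμ for every bounded Borel g ≥ 0; (kernel logarithmic Sobolev inequality) there is M > 0 such that T(f² log f²)(x) ≤ M · T(|∇f|²)(x) + T(f²)(x) · log(T(f²)(x)) for every f ∈ C¹_c(ℝ^d) and x ∈ ℝ^d; and, for some 1 < p < q < ∞ and C > 0, ‖Tg‖_{q,ν} ≤ C ‖g‖_{p,μ} for every bounded Borel g. Then for every f ∈ C¹_c(ℝ^d), ∫_{ℝ^d} f² log( |f| / ‖f‖_{2,μ} ) dμ ≤ ( M p(q−1) / (2(q−p)) ) ∫_{ℝ^d} |∇f|² dμ + ( pq / (2(q−p)) ) (log C) ‖f‖²_{2,μ}, with the convention 0·log 0 = 0. -/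

import Mathlib

open MeasureTheory

/-- `g : ℝ^d → ℝ` is bounded and Borel measurable. -/
def BddBorel {d : ℕ} (g : EuclideanSpace ℝ (Fin d) → ℝ) : Prop :=
  Measurable g ∧ ∃ M, ∀ x, |g x| ≤ M

/-- `f : ℝ^d → ℝ` is continuously differentiable with compact support. -/
def C1c {d : ℕ} (f : EuclideanSpace ℝ (Fin d) → ℝ) : Prop :=
  ContDiff ℝ 1 f ∧ HasCompactSupport f

/-!
Write `T h x = ∫ h dκ x` for a kernel `κ`, put `μ = κ ∘ₘ ν` and `h = f ^ 2`, and let `Ent` denote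
the entropy functional. The log-sum inequality is applied twice: under each `κ x` to the pair
`(h, h ^ (1/p))`, and under `ν` to the pair `(T h, (T (h ^ (1/p))) ^ q)`. Inserting the bound
`‖T‖_{p → q} ≤ C` in the result gives
`(q/p - 1) Ent_μ h ≤ (q - 1) ∫ Ent_{κ x} h dν + q (∫ h dμ) log C`,
in which the entropies `Ent_{κ x} h` are controlled by the kernel logarithmic Sobolev inequality.
-/

open ProbabilityTheory

section Entropy

variable {α : Type*} [MeasurableSpace α] {μ : Measure α}

/-- The entropy `∫ h log h dμ - (∫ h dμ) log (∫ h dμ)` of a nonnegative function `h`. Logarithmic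
Sobolev inequalities bound the entropy of `f ^ 2`; since `Real.log 0 = 0`, the convention
`0 log 0 = 0` is built in. -/
noncomputable def entropy (μ : Measure α) (h : α → ℝ) : ℝ :=
  ∫ x, h x * Real.log (h x) ∂μ - (∫ x, h x ∂μ) * Real.log (∫ x, h x ∂μ)

lemma mul_log_div_le_add {a b t : ℝ} (ha : 0 ≤ a) (hb : 0 ≤ b) (ht : 0 < t) (hab : b = 0 → a = 0) :
    a * Real.log (b / a) ≤ a * Real.log t + b / t - a := by
  rcases ha.eq_or_lt with rfl | ha
  · simpa using div_nonneg hb ht.le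
  · have hb : 0 < b := hb.lt_of_ne fun h => ha.ne' (hab h.symm)
    have htangent := mul_le_mul_of_nonneg_left
      (Real.log_le_sub_one_of_pos (show 0 < b / a / t by positivity)) ha.le
    rw [Real.log_div (by positivity) ht.ne'] at htangent
    have hcancel : a * (b / a / t - 1) = b / t - a := by field_simp
    linarith

lemma integral_eq_zero_of_zero_imp_zero {a b : α → ℝ} (hb : 0 ≤ᵐ[μ] b) (hb_int : Integrable b μ)
    (hab : ∀ᵐ x ∂μ, b x = 0 → a x = 0) (h : ∫ x, b x ∂μ = 0) : ∫ x, a x ∂μ = 0 := by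
  apply integral_eq_zero_of_ae
  filter_upwards [hab, (integral_eq_zero_iff_of_nonneg_ae hb hb_int).1 h] with x hx hbx
  exact hx hbx

/-- The log-sum inequality, stated for a minorant `φ` of `a log (b / a)` because the latter need
not be integrable. -/
lemma integral_le_mul_log_div_integral {a b φ : α → ℝ} (ha : 0 ≤ᵐ[μ] a) (hb : 0 ≤ᵐ[μ] b)
    (ha_int : Integrable a μ) (hb_int : Integrable b μ) (hφ_int : Integrable φ μ)
    (hab : ∀ᵐ x ∂μ, b x = 0 → a x = 0) (hφ : ∀ᵐ x ∂μ, φ x ≤ a x * Real.log (b x / a x)) :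
    ∫ x, φ x ∂μ ≤ (∫ x, a x ∂μ) * Real.log ((∫ x, b x ∂μ) / ∫ x, a x ∂μ) := by
  have hA0 : 0 ≤ ∫ x, a x ∂μ := integral_nonneg_of_ae ha
  have hB0 : 0 ≤ ∫ x, b x ∂μ := integral_nonneg_of_ae hb
  rcases hA0.eq_or_lt with hA | hA
  · rw [← hA, zero_mul]
    apply integral_nonpos_of_ae
    filter_upwards [hφ, (integral_eq_zero_iff_of_nonneg_ae ha ha_int).1 hA.symm] with x hx hax
    simpa [show a x = 0 from hax] using hx
  · have hB : 0 < ∫ x, b x ∂μ := hB0.lt_of_ne fun h =>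
      hA.ne' (integral_eq_zero_of_zero_imp_zero hb hb_int hab h.symm)
    set t := (∫ x, b x ∂μ) / ∫ x, a x ∂μ with ht_def
    have ht : 0 < t := div_pos hB hA
    have hlog_int : Integrable (fun x => a x * Real.log t) μ := ha_int.mul_const _
    have hsum_int : Integrable (fun x => a x * Real.log t + b x / t) μ :=
      hlog_int.add (hb_int.div_const t)
    calc ∫ x, φ x ∂μ ≤ ∫ x, (a x * Real.log t + b x / t - a x) ∂μ := by
          refine integral_mono_ae hφ_int (hsum_int.sub ha_int) ?_
          filter_upwards [hφ, ha, hb, hab] with x hφx hax hbx habx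
          exact hφx.trans (mul_log_div_le_add hax hbx ht habx)
      _ = (∫ x, a x ∂μ) * Real.log t + (∫ x, b x ∂μ) / t - ∫ x, a x ∂μ := by
          rw [integral_sub hsum_int ha_int, integral_add hlog_int (hb_int.div_const t),
            integral_mul_const, integral_div]
      _ = (∫ x, a x ∂μ) * Real.log t := by
          rw [ht_def, div_div_cancel₀ hB.ne']
          ring

lemma sub_one_mul_integral_mul_log_le {h : α → ℝ} {r : ℝ} (hr : r ≠ 0) (h_nonneg : ∀ x, 0 ≤ h x)
    (h_int : Integrable h μ) (h_log_int : Integrable (fun x => h x * Real.log (h x)) μ)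
    (h_rpow_int : Integrable (fun x => h x ^ r) μ) :
    (r - 1) * ∫ x, h x * Real.log (h x) ∂μ ≤
      (∫ x, h x ∂μ) * Real.log ((∫ x, h x ^ r ∂μ) / ∫ x, h x ∂μ) := by
  rw [← integral_const_mul]
  refine integral_le_mul_log_div_integral (.of_forall h_nonneg)
    (.of_forall fun x => Real.rpow_nonneg (h_nonneg x) r) h_int h_rpow_int
    (h_log_int.const_mul _) (.of_forall fun x hx => (Real.rpow_eq_zero (h_nonneg x) hr).1 hx)
    (.of_forall fun x => ?_)
  rcases (h_nonneg x).eq_or_lt with hx | hx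
  · simp [← hx]
  · rw [Real.log_div (by positivity) hx.ne', Real.log_rpow hx]
    exact le_of_eq (by ring)

lemma sq_rpow_integral_abs_rpow_two (f : α → ℝ) :
    ((∫ x, |f x| ^ (2 : ℝ) ∂μ) ^ ((1 : ℝ) / 2)) ^ 2 = ∫ x, f x ^ 2 ∂μ := by
  simp only [Real.rpow_two, sq_abs]
  rw [← Real.sqrt_eq_rpow, Real.sq_sqrt (integral_nonneg fun x => sq_nonneg (f x))]

lemma integral_sq_mul_log_abs_div {f : α → ℝ} (hf : Integrable (fun x => f x ^ 2) μ)
    (hf_log : Integrable (fun x => f x ^ 2 * Real.log (f x ^ 2)) μ) :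
    ∫ x, f x ^ 2 * Real.log (|f x| / (∫ z, |f z| ^ (2 : ℝ) ∂μ) ^ ((1 : ℝ) / 2)) ∂μ =
      1 / 2 * entropy μ (fun x => f x ^ 2) := by
  have hpoint : ∀ᵐ x ∂μ,
      f x ^ 2 * Real.log (|f x| / (∫ z, |f z| ^ (2 : ℝ) ∂μ) ^ ((1 : ℝ) / 2)) =
        1 / 2 * (f x ^ 2 * Real.log (f x ^ 2) - f x ^ 2 * Real.log (∫ z, f z ^ 2 ∂μ)) := by
    simp only [Real.rpow_two, sq_abs]
    have hnorm : 0 ≤ ∫ z, f z ^ 2 ∂μ := integral_nonneg fun z => sq_nonneg (f z)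
    rcases hnorm.eq_or_lt with hnorm | hnorm
    · filter_upwards [(integral_eq_zero_iff_of_nonneg (fun z => sq_nonneg (f z)) hf).1 hnorm.symm]
        with x hx
      simp [show f x ^ 2 = 0 from hx]
    · refine .of_forall fun x => ?_
      by_cases hx : f x = 0
      · simp [hx]
      · rw [Real.log_div (by positivity) (by positivity), Real.log_rpow hnorm, Real.log_abs,
          Real.log_pow]
        push_cast
        ring
  rw [integral_congr_ae hpoint, integral_const_mul, integral_sub hf_log (hf.mul_const _),
    integral_mul_const, entropy]

lemma integrable_comp_of_continuous_of_bound [IsFiniteMeasure μ] {φ : ℝ → ℝ} (hφ : Continuous φ)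
    {g : α → ℝ} (hg : AEStronglyMeasurable g μ) {B : ℝ} (hB : ∀ x, |g x| ≤ B) :
    Integrable (fun x => φ (g x)) μ := by
  obtain ⟨D, hD⟩ := (isCompact_Icc (a := -B) (b := B)).exists_bound_of_continuousOn hφ.continuousOn
  exact .of_bound (hφ.comp_aestronglyMeasurable hg) D
    (.of_forall fun x => hD _ (abs_le.1 (hB x)))

end Entropy

section Kernel

variable {X Y : Type*} [MeasurableSpace X] [MeasurableSpace Y] {κ : Kernel X Y} {ν : Measure X}

lemma integrable_integral_kernel {g : Y → ℝ} (hg : Integrable g (κ ∘ₘ ν)) :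
    Integrable (fun x => ∫ y, g y ∂κ x) ν := by
  rw [Measure.comp_eq_comp_const_apply] at hg
  simpa using hg.integral_comp

lemma integral_comp_measure {g : Y → ℝ} (hg : Integrable g (κ ∘ₘ ν)) :
    ∫ y, g y ∂(κ ∘ₘ ν) = ∫ x, ∫ y, g y ∂κ x ∂ν := by
  rw [Measure.comp_eq_comp_const_apply] at hg ⊢
  simpa using Kernel.integral_comp hg

lemma entropy_comp {h : Y → ℝ} (h_int : Integrable h (κ ∘ₘ ν))
    (h_log_int : Integrable (fun y => h y * Real.log (h y)) (κ ∘ₘ ν))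
    (hT_log_int : Integrable (fun x => (∫ y, h y ∂κ x) * Real.log (∫ y, h y ∂κ x)) ν) :
    entropy (κ ∘ₘ ν) h =
      ∫ x, entropy (κ x) h ∂ν + entropy ν (fun x => ∫ y, h y ∂κ x) := by
  simp only [entropy]
  rw [integral_sub (integrable_integral_kernel h_log_int) hT_log_int,
    integral_comp_measure h_log_int, integral_comp_measure h_int]
  ring

lemma ae_integral_rpow_rpow_eq_zero_imp {h : Y → ℝ} {r q : ℝ} (hr : r ≠ 0) (hq : q ≠ 0)
    (h_nonneg : ∀ y, 0 ≤ h y) (h_rpow_int : ∀ᵐ x ∂ν, Integrable (fun y => h y ^ r) (κ x)) :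
    ∀ᵐ x ∂ν, (∫ y, h y ^ r ∂κ x) ^ q = 0 → ∫ y, h y ∂κ x = 0 := by
  have h_rpow_nonneg (y : Y) : 0 ≤ h y ^ r := Real.rpow_nonneg (h_nonneg y) r
  filter_upwards [h_rpow_int] with x hx hzero
  exact integral_eq_zero_of_zero_imp_zero (.of_forall h_rpow_nonneg) hx
    (.of_forall fun y hy => (Real.rpow_eq_zero (h_nonneg y) hr).1 hy)
    ((Real.rpow_eq_zero (integral_nonneg h_rpow_nonneg) hq).1 hzero)

/-- Two nested log-sum inequalities: `q` times the one for `κ x` is absorbed in the second argument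
of the one for `ν`. -/
lemma integral_mul_log_add_le_mul_log_div {h : Y → ℝ} {r q : ℝ} (hr : r ≠ 0) (hq : 0 < q)
    (h_nonneg : ∀ y, 0 ≤ h y) (h_int : Integrable h (κ ∘ₘ ν))
    (h_log_int : Integrable (fun y => h y * Real.log (h y)) (κ ∘ₘ ν))
    (h_rpow_int : ∀ᵐ x ∂ν, Integrable (fun y => h y ^ r) (κ x))
    (hT_log_int : Integrable (fun x => (∫ y, h y ∂κ x) * Real.log (∫ y, h y ∂κ x)) ν)
    (hT_rpow_int : Integrable (fun x => (∫ y, h y ^ r ∂κ x) ^ q) ν) :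
    (q - 1) * ∫ x, (∫ y, h y ∂κ x) * Real.log (∫ y, h y ∂κ x) ∂ν +
        q * (r - 1) * ∫ y, h y * Real.log (h y) ∂(κ ∘ₘ ν) ≤
      (∫ y, h y ∂(κ ∘ₘ ν)) *
        Real.log ((∫ x, (∫ y, h y ^ r ∂κ x) ^ q ∂ν) / ∫ y, h y ∂(κ ∘ₘ ν)) := by
  have hT_nonneg (x : X) : 0 ≤ ∫ y, h y ∂κ x := integral_nonneg h_nonneg
  have hTr_nonneg (x : X) : 0 ≤ ∫ y, h y ^ r ∂κ x :=
    integral_nonneg fun y => Real.rpow_nonneg (h_nonneg y) r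
  have hzero := ae_integral_rpow_rpow_eq_zero_imp hr hq.ne' h_nonneg h_rpow_int
  have hTlog_int := integrable_integral_kernel h_log_int
  rw [integral_comp_measure h_log_int, integral_comp_measure h_int, ← integral_const_mul,
    ← integral_const_mul, ← integral_add (hT_log_int.const_mul _) (hTlog_int.const_mul _)]
  refine integral_le_mul_log_div_integral (.of_forall hT_nonneg)
    (.of_forall fun x => Real.rpow_nonneg (hTr_nonneg x) q) (integrable_integral_kernel h_int)
    hT_rpow_int ((hT_log_int.const_mul _).add (hTlog_int.const_mul _)) hzero ?_
  filter_upwards [hzero, h_rpow_int, Measure.ae_integrable_of_integrable_comp h_int,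
    Measure.ae_integrable_of_integrable_comp h_log_int] with x hx hx_rpow hx_int hx_log
  have hκ := mul_le_mul_of_nonneg_left
    (sub_one_mul_integral_mul_log_le hr h_nonneg hx_int hx_log hx_rpow) hq.le
  rcases (hT_nonneg x).eq_or_lt with hT | hT
  · simp only [← hT, zero_mul, mul_zero, zero_add] at hκ ⊢
    linarith
  · have hTr : 0 < ∫ y, h y ^ r ∂κ x := (hTr_nonneg x).lt_of_ne fun h0 =>
      hT.ne' (hx (by rw [← h0, Real.zero_rpow hq.ne']))
    rw [Real.log_div hTr.ne' hT.ne'] at hκ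
    rw [Real.log_div (by positivity) hT.ne', Real.log_rpow hTr]
    linarith

lemma mul_log_div_le_of_rpow_le {a Q C p q : ℝ} (hq : 0 < q) (ha : 0 ≤ a) (hQ : 0 ≤ Q)
    (hQa : Q = 0 → a = 0) (hbound : Q ^ (1 / q) ≤ C * a ^ (1 / p)) :
    a * Real.log (Q / a) ≤ q * (a * Real.log C) + (q / p - 1) * (a * Real.log a) := by
  rcases ha.eq_or_lt with rfl | ha
  · simp
  · have hQ : 0 < Q := hQ.lt_of_ne fun h => ha.ne' (hQa h.symm)
    have hC : 0 < C := pos_of_mul_pos_left ((Real.rpow_pos_of_pos hQ _).trans_le hbound)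
      (Real.rpow_nonneg ha.le _)
    have hlog : 1 / q * Real.log Q ≤ Real.log C + 1 / p * Real.log a := by
      rw [← Real.log_rpow hQ, ← Real.log_rpow ha, ← Real.log_mul hC.ne' (by positivity)]
      exact Real.log_le_log (by positivity) hbound
    calc a * Real.log (Q / a) = q * a * (1 / q * Real.log Q) - a * Real.log a := by
          rw [Real.log_div hQ.ne' ha.ne']
          field_simp
      _ ≤ q * a * (Real.log C + 1 / p * Real.log a) - a * Real.log a := by gcongr
      _ = q * (a * Real.log C) + (q / p - 1) * (a * Real.log a) := by ring

lemma entropy_comp_le_of_rpow_integral_le {h : Y → ℝ} {p q C : ℝ} (hp : p ≠ 0) (hq : 0 < q)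
    (h_nonneg : ∀ y, 0 ≤ h y) (h_int : Integrable h (κ ∘ₘ ν))
    (h_log_int : Integrable (fun y => h y * Real.log (h y)) (κ ∘ₘ ν))
    (h_rpow_int : ∀ᵐ x ∂ν, Integrable (fun y => h y ^ (1 / p)) (κ x))
    (hT_log_int : Integrable (fun x => (∫ y, h y ∂κ x) * Real.log (∫ y, h y ∂κ x)) ν)
    (hT_rpow_int : Integrable (fun x => (∫ y, h y ^ (1 / p) ∂κ x) ^ q) ν)
    (hbound : (∫ x, (∫ y, h y ^ (1 / p) ∂κ x) ^ q ∂ν) ^ (1 / q) ≤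
      C * (∫ y, h y ∂(κ ∘ₘ ν)) ^ (1 / p)) :
    (q / p - 1) * entropy (κ ∘ₘ ν) h ≤
      (q - 1) * ∫ x, entropy (κ x) h ∂ν + q * ((∫ y, h y ∂(κ ∘ₘ ν)) * Real.log C) := by
  have hr : 1 / p ≠ 0 := one_div_ne_zero hp
  have hTr_nonneg (x : X) : 0 ≤ (∫ y, h y ^ (1 / p) ∂κ x) ^ q :=
    Real.rpow_nonneg (integral_nonneg fun y => Real.rpow_nonneg (h_nonneg y) _) q
  have hzero : ∫ x, (∫ y, h y ^ (1 / p) ∂κ x) ^ q ∂ν = 0 → ∫ y, h y ∂(κ ∘ₘ ν) = 0 := by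
    rw [integral_comp_measure h_int]
    exact integral_eq_zero_of_zero_imp_zero (.of_forall hTr_nonneg) hT_rpow_int
      (ae_integral_rpow_rpow_eq_zero_imp hr hq.ne' h_nonneg h_rpow_int)
  have hlogsum := integral_mul_log_add_le_mul_log_div hr hq h_nonneg h_int h_log_int h_rpow_int
    hT_log_int hT_rpow_int
  have hlogC := mul_log_div_le_of_rpow_le hq (integral_nonneg h_nonneg) (integral_nonneg hTr_nonneg)
    hzero hbound
  have hchain := entropy_comp h_int h_log_int hT_log_int
  simp only [entropy, ← integral_comp_measure h_int] at hchain ⊢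
  linear_combination hlogsum + hlogC + (q - 1) * hchain

lemma integrable_comp_integral_kernel_of_bound [IsFiniteKernel κ] [IsFiniteMeasure ν] {φ : ℝ → ℝ}
    (hφ : Continuous φ) {g : Y → ℝ} (hg : Measurable g) {B : ℝ} (hB : ∀ y, |g y| ≤ B) :
    Integrable (fun x => φ (∫ y, g y ∂κ x)) ν := by
  refine integrable_comp_of_continuous_of_bound (B := |B| * κ.bound.toReal) hφ
    hg.stronglyMeasurable.integral_kernel.aestronglyMeasurable fun x => ?_
  calc |∫ y, g y ∂κ x| ≤ |B| * (κ x).real Set.univ :=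
        norm_integral_le_of_norm_le_const (f := g)
          (.of_forall fun y => (hB y).trans (le_abs_self B))
    _ ≤ |B| * κ.bound.toReal := by
        gcongr
        exact ENNReal.toReal_mono κ.bound_ne_top (κ.measure_le_bound x _)

lemma entropy_comp_le_of_bound [IsFiniteKernel κ] [IsFiniteMeasure ν] {p q C : ℝ} (hp : 0 < p)
    (hq : 0 < q) {h : Y → ℝ} (h_meas : Measurable h) (h_nonneg : ∀ y, 0 ≤ h y) {B : ℝ}
    (hB : ∀ y, |h y| ≤ B)
    (hbound : ∀ g : Y → ℝ, Measurable g → (∃ B, ∀ y, |g y| ≤ B) →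
      (∫ x, |∫ y, g y ∂κ x| ^ q ∂ν) ^ (1 / q) ≤ C * (∫ y, |g y| ^ p ∂(κ ∘ₘ ν)) ^ (1 / p)) :
    (q / p - 1) * entropy (κ ∘ₘ ν) h ≤
      (q - 1) * ∫ x, entropy (κ x) h ∂ν + q * ((∫ y, h y ∂(κ ∘ₘ ν)) * Real.log C) := by
  have h_rpow_nonneg (y : Y) : 0 ≤ h y ^ (1 / p) := Real.rpow_nonneg (h_nonneg y) _
  have h_rpow_bdd (y : Y) : |h y ^ (1 / p)| ≤ B ^ (1 / p) := by
    rw [abs_of_nonneg (h_rpow_nonneg y)]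
    exact Real.rpow_le_rpow (h_nonneg y) (le_of_abs_le (hB y)) (by positivity)
  have h_rpow_meas : Measurable fun y => h y ^ (1 / p) := h_meas.pow_const _
  have hint (m : Measure Y) [IsFiniteMeasure m] {φ : ℝ → ℝ} (hφ : Continuous φ) :
      Integrable (fun y => φ (h y)) m :=
    integrable_comp_of_continuous_of_bound hφ h_meas.aestronglyMeasurable hB
  refine entropy_comp_le_of_rpow_integral_le hp.ne' hq h_nonneg
    (hint _ continuous_id) (hint _ Real.continuous_mul_log)
    (.of_forall fun x => hint _ (Real.continuous_rpow_const (by positivity)))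
    (integrable_comp_integral_kernel_of_bound Real.continuous_mul_log h_meas hB)
    (integrable_comp_integral_kernel_of_bound (Real.continuous_rpow_const hq.le) h_rpow_meas
      h_rpow_bdd) ?_
  have hroot (y : Y) : |h y ^ (1 / p)| ^ p = h y := by
    rw [abs_of_nonneg (h_rpow_nonneg y), one_div, Real.rpow_inv_rpow (h_nonneg y) hp.ne']
  have habs (x : X) : |∫ y, h y ^ (1 / p) ∂κ x| = ∫ y, h y ^ (1 / p) ∂κ x :=
    abs_of_nonneg (integral_nonneg h_rpow_nonneg)
  simpa only [habs, hroot] using hbound _ h_rpow_meas ⟨_, h_rpow_bdd⟩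

lemma integral_entropy_le_of_ae_le {h Γ : Y → ℝ} {M : ℝ} (hΓ : Integrable Γ (κ ∘ₘ ν))
    (h_log_int : Integrable (fun y => h y * Real.log (h y)) (κ ∘ₘ ν))
    (hT_log_int : Integrable (fun x => (∫ y, h y ∂κ x) * Real.log (∫ y, h y ∂κ x)) ν)
    (hLSI : ∀ᵐ x ∂ν, ∫ y, h y * Real.log (h y) ∂κ x ≤
      M * ∫ y, Γ y ∂κ x + (∫ y, h y ∂κ x) * Real.log (∫ y, h y ∂κ x)) :
    ∫ x, entropy (κ x) h ∂ν ≤ M * ∫ y, Γ y ∂(κ ∘ₘ ν) := by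
  rw [integral_comp_measure hΓ, ← integral_const_mul]
  refine integral_mono_ae ((integrable_integral_kernel h_log_int).sub hT_log_int)
    ((integrable_integral_kernel hΓ).const_mul M) ?_
  filter_upwards [hLSI] with x hx
  exact sub_le_iff_le_add.2 hx

/-- `Γ` plays the role of `‖∇f‖ ^ 2`. -/
theorem LSI_from_kernel_operator_general [IsFiniteKernel κ] [IsFiniteMeasure ν] {p q C M : ℝ}
    (hp : 0 < p) (hpq : p < q) (hq : 1 ≤ q) {f Γ : Y → ℝ} (hf : Measurable f)
    (hf_bdd : ∃ B, ∀ y, |f y| ≤ B) (hΓ : Integrable Γ (κ ∘ₘ ν))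
    (hLSI : ∀ᵐ x ∂ν, ∫ y, f y ^ 2 * Real.log (f y ^ 2) ∂κ x ≤
      M * ∫ y, Γ y ∂κ x + (∫ y, f y ^ 2 ∂κ x) * Real.log (∫ y, f y ^ 2 ∂κ x))
    (hbound : ∀ g : Y → ℝ, Measurable g → (∃ B, ∀ y, |g y| ≤ B) →
      (∫ x, |∫ y, g y ∂κ x| ^ q ∂ν) ^ (1 / q) ≤ C * (∫ y, |g y| ^ p ∂(κ ∘ₘ ν)) ^ (1 / p)) :
    ∫ y, f y ^ 2 * Real.log
        (|f y| / (∫ z, |f z| ^ (2 : ℝ) ∂(κ ∘ₘ ν)) ^ ((1 : ℝ) / 2)) ∂(κ ∘ₘ ν) ≤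
      (M * p * (q - 1) / (2 * (q - p))) * ∫ y, Γ y ∂(κ ∘ₘ ν) +
        (p * q / (2 * (q - p))) * Real.log C *
          ((∫ z, |f z| ^ (2 : ℝ) ∂(κ ∘ₘ ν)) ^ ((1 : ℝ) / 2)) ^ 2 := by
  obtain ⟨B, hB⟩ := hf_bdd
  have hsq_meas : Measurable fun y => f y ^ 2 := hf.pow_const 2
  have hsq_bdd (y : Y) : |f y ^ 2| ≤ B ^ 2 := by
    rw [abs_pow]
    exact pow_le_pow_left₀ (abs_nonneg _) (hB y) 2
  have hsq_int : Integrable (fun y => f y ^ 2) (κ ∘ₘ ν) :=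
    integrable_comp_of_continuous_of_bound continuous_id hsq_meas.aestronglyMeasurable hsq_bdd
  have hsq_log_int : Integrable (fun y => f y ^ 2 * Real.log (f y ^ 2)) (κ ∘ₘ ν) :=
    integrable_comp_of_continuous_of_bound Real.continuous_mul_log hsq_meas.aestronglyMeasurable
      hsq_bdd
  have hfiber : ∫ x, entropy (κ x) (fun y => f y ^ 2) ∂ν ≤ M * ∫ y, Γ y ∂(κ ∘ₘ ν) :=
    integral_entropy_le_of_ae_le hΓ hsq_log_int
      (integrable_comp_integral_kernel_of_bound Real.continuous_mul_log hsq_meas hsq_bdd)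
      hLSI
  have hqp : 0 < q - p := sub_pos.2 hpq
  rw [sq_rpow_integral_abs_rpow_two, integral_sq_mul_log_abs_div hsq_int hsq_log_int]
  set E := entropy (κ ∘ₘ ν) (fun y => f y ^ 2)
  set N := ∫ y, f y ^ 2 ∂(κ ∘ₘ ν)
  set D := ∫ y, Γ y ∂(κ ∘ₘ ν)
  have hentropy : (q / p - 1) * E ≤ (q - 1) * (M * D) + q * (N * Real.log C) :=
    (entropy_comp_le_of_bound hp (hp.trans hpq) hsq_meas (fun y => sq_nonneg (f y)) hsq_bdd
      hbound).trans (by gcongr)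
  calc 1 / 2 * E = p / (2 * (q - p)) * ((q / p - 1) * E) := by field_simp
    _ ≤ p / (2 * (q - p)) * ((q - 1) * (M * D) + q * (N * Real.log C)) := by gcongr
    _ = M * p * (q - 1) / (2 * (q - p)) * D + p * q / (2 * (q - p)) * Real.log C * N := by ring

lemma exists_isMarkovKernel_of_density {ρ : Measure Y} [SFinite ρ] {k : X → Y → ℝ}
    (hk_meas : Measurable (Function.uncurry k)) (hk_nonneg : ∀ x y, 0 ≤ k x y)
    (hk_norm : ∀ x, ∫ y, k x y ∂ρ = 1) :
    ∃ κ : Kernel X Y, IsMarkovKernel κ ∧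
      ∀ (g : Y → ℝ) (x : X), ∫ y, g y ∂κ x = ∫ y, k x y * g y ∂ρ := by
  have hmeas : Measurable (Function.uncurry fun x y => ENNReal.ofReal (k x y)) :=
    hk_meas.ennreal_ofReal
  refine ⟨(Kernel.const X ρ).withDensity fun x y => ENNReal.ofReal (k x y), ⟨fun x => ⟨?_⟩⟩,
    fun g x => ?_⟩
  · rw [Kernel.withDensity_apply' _ hmeas, Kernel.const_apply, setLIntegral_univ,
      ← ofReal_integral_eq_lintegral_ofReal (integrable_of_integral_eq_one (hk_norm x))
        (.of_forall (hk_nonneg x)), hk_norm, ENNReal.ofReal_one]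
  · rw [Kernel.withDensity_apply _ hmeas, Kernel.const_apply,
      integral_withDensity_eq_integral_toReal_smul hmeas.of_uncurry_left
        (.of_forall fun y => ENNReal.ofReal_lt_top)]
    simp only [ENNReal.toReal_ofReal (hk_nonneg x _), smul_eq_mul]

lemma comp_eq_of_integral_measureReal_eq [IsFiniteKernel κ] [IsFiniteMeasure ν] {μ : Measure Y}
    [IsFiniteMeasure μ] (h : ∀ s, MeasurableSet s → ∫ x, (κ x).real s ∂ν = μ.real s) :
    κ ∘ₘ ν = μ := by
  ext s hs
  have hs_int : Integrable (s.indicator (1 : Y → ℝ)) (κ ∘ₘ ν) :=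
    (integrable_const (1 : ℝ)).indicator hs
  rw [← measureReal_eq_measureReal_iff, ← h s hs, ← integral_indicator_one hs,
    integral_comp_measure hs_int]
  simp only [integral_indicator_one hs]

end Kernel

section CompactSupport

variable {d : ℕ} {f : EuclideanSpace ℝ (Fin d) → ℝ}

lemma C1c.exists_abs_le (hf : C1c f) : ∃ B, ∀ x, |f x| ≤ B :=
  hf.2.exists_bound_of_continuous hf.1.continuous

lemma C1c.integrable_norm_gradient_sq (hf : C1c f) (μ : Measure (EuclideanSpace ℝ (Fin d)))
    [IsFiniteMeasure μ] : Integrable (fun x => ‖gradient f x‖ ^ 2) μ := by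
  simp only [gradient, LinearIsometryEquiv.norm_map]
  have hcont : Continuous fun x => ‖fderiv ℝ f x‖ ^ 2 :=
    ((hf.1.continuous_fderiv one_ne_zero).norm).pow 2
  have hsupp : HasCompactSupport fun x => ‖fderiv ℝ f x‖ ^ 2 :=
    (hf.2.fderiv (𝕜 := ℝ)).comp_left (g := fun L => ‖L‖ ^ 2) (by simp)
  exact hcont.integrable_of_hasCompactSupport hsupp

end CompactSupport

/-- for a positive normalized kernel operator
`(Tg)(x) = ∫ k(x,y) g(y) dy` satisfying the invariance, a kernel logarithmic Sobolev
inequality with constant `M`, and `‖Tg‖_{q,ν} ≤ C‖g‖_{p,μ}`, the measure `μ` satisfies a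
logarithmic Sobolev inequality on `C¹_c(ℝ^d)`. -/
theorem LSI_from_kernel_operator
    {d : ℕ} (μ ν : Measure (EuclideanSpace ℝ (Fin d)))
    [IsProbabilityMeasure μ] [IsProbabilityMeasure ν]
    (k : EuclideanSpace ℝ (Fin d) → EuclideanSpace ℝ (Fin d) → ℝ)
    (hkmeas : Measurable (Function.uncurry k))
    (hkpos : ∀ x y, 0 < k x y)
    (hknorm : ∀ x, ∫ y, k x y = 1)
    (p q C M : ℝ) (hp : 1 < p) (hpq : p < q) (hC : 0 < C) (hM : 0 < M)
    (hinv : ∀ g : EuclideanSpace ℝ (Fin d) → ℝ, BddBorel g → (∀ x, 0 ≤ g x) →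
      ∫ x, (∫ y, k x y * g y) ∂ν = ∫ x, g x ∂μ)
    (hkLSI : ∀ f : EuclideanSpace ℝ (Fin d) → ℝ, C1c f →
      ∀ x : EuclideanSpace ℝ (Fin d),
        (∫ y, k x y * ((f y) ^ 2 * Real.log ((f y) ^ 2)))
          ≤ M * (∫ y, k x y * ‖gradient f y‖ ^ 2)
            + (∫ y, k x y * (f y) ^ 2) * Real.log (∫ y, k x y * (f y) ^ 2))
    (hbound : ∀ g : EuclideanSpace ℝ (Fin d) → ℝ, BddBorel g →
      (∫ x, |∫ y, k x y * g y| ^ q ∂ν) ^ (1 / q)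
        ≤ C * (∫ x, |g x| ^ p ∂μ) ^ (1 / p)) :
    ∀ f : EuclideanSpace ℝ (Fin d) → ℝ, C1c f →
      ∫ x, (f x) ^ 2 * Real.log (|f x| / (∫ z, |f z| ^ (2 : ℝ) ∂μ) ^ ((1 : ℝ) / 2)) ∂μ
        ≤ (M * p * (q - 1) / (2 * (q - p))) * ∫ x, ‖gradient f x‖ ^ 2 ∂μ
          + (p * q / (2 * (q - p))) * Real.log C
            * ((∫ z, |f z| ^ (2 : ℝ) ∂μ) ^ ((1 : ℝ) / 2)) ^ 2 := by
  obtain ⟨κ, _, hκ⟩ := exists_isMarkovKernel_of_density hkmeas (fun x y => (hkpos x y).le) hknorm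
  obtain rfl : κ ∘ₘ ν = μ := comp_eq_of_integral_measureReal_eq fun s hs => by
    simpa only [← hκ, integral_indicator_one hs] using hinv (s.indicator 1)
      ⟨measurable_one.indicator hs, 1, fun x => by by_cases hx : x ∈ s <;> simp [hx]⟩
      (Set.indicator_nonneg fun _ _ => zero_le_one)
  simp only [← hκ] at hkLSI hbound
  exact fun f hf => LSI_from_kernel_operator_general (zero_lt_one.trans hp) hpq (hp.trans hpq).le
    hf.1.continuous.measurable hf.exists_abs_le (hf.integrable_norm_gradient_sq _)
    (.of_forall (hkLSI f hf)) fun g hg hg_bdd => hbound g ⟨hg, hg_bdd⟩
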